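/- With the hypotheses of the Leibniz-commutation lemma (normalized symmetrized left-invariant operators Z^α on SU(2)), for the complex vector fields X_± = -(Z₂ ± iZ₁) and any smooth complex-valued functions f, g on SU(2) and any m ≥ 0: Σ_{|α|=m} ∫_{SU(2)} ((Z^α X_± f)(Z^α g) + (Z^α f)(Z^α X_± g)) dμ = 0, where dμ is the normalized Haar measure. -/

import Mathlib

open Finset

/-- The Levi-Civita symbol on `Fin 3`, with `ε 0 1 2 = 1`. -/
noncomputable def leviCivita (i j k : Fin 3) : ℝ :=
  (((j : ℝ) - (i : ℝ)) * ((k : ℝ) - (j : ℝ)) * ((k : ℝ) - (i : ℝ))) / 2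

/-- The symmetrized operator `Z'^α`. -/
noncomputable def symOp {A : Type*} [AddCommGroup A] [Module ℂ A]
    (Z : Fin 3 → Module.End ℂ A) (α : Fin 3 → ℕ) : Module.End ℂ A :=
  ∑ w ∈ Finset.univ.filter
      (fun w : Fin (α 0 + α 1 + α 2) → Fin 3 =>
        ∀ i : Fin 3, (Finset.univ.filter (fun j => w j = i)).card = α i),
    (List.ofFn (fun j => Z (w j))).prod

/-- The normalized symmetrized operator `Z^α = f(α) Z'^α`. -/
noncomputable def normSymOp {A : Type*} [AddCommGroup A] [Module ℂ A]
    (c : ℝ) (Z : Fin 3 → Module.End ℂ A) (α : Fin 3 → ℕ) : Module.End ℂ A :=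
  ((c * Real.sqrt (((α 0).factorial * (α 1).factorial * (α 2).factorial : ℝ)
      / ((α 0 + α 1 + α 2).factorial : ℝ)) : ℝ) : ℂ) • symOp Z α


/-- content of a word -/
def wcnt {m : ℕ} (w : Fin m → Fin 3) (i : Fin 3) : ℕ :=
  (Finset.univ.filter (fun j => w j = i)).card

/-- product of operators along a word -/
noncomputable def wprod {A : Type*} [AddCommGroup A] [Module ℂ A]
    (Z : Fin 3 → Module.End ℂ A) {m : ℕ} (w : Fin m → Fin 3) : Module.End ℂ A :=
  (List.ofFn (fun j => Z (w j))).prod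

lemma symOp_eq {A : Type*} [AddCommGroup A] [Module ℂ A]
    (Z : Fin 3 → Module.End ℂ A) (α : Fin 3 → ℕ) (m : ℕ) (h : α 0 + α 1 + α 2 = m) :
    symOp Z α = ∑ w ∈ Finset.univ.filter (fun w : Fin m → Fin 3 => wcnt w = α), wprod Z w := by
  subst h
  unfold symOp wprod
  refine Finset.sum_congr ?_ (fun _ _ => rfl)
  ext w
  simp [funext_iff, wcnt]

lemma wcnt_comp {m : ℕ} (w : Fin m → Fin 3) (σ : Equiv.Perm (Fin m)) :
    wcnt (w ∘ σ) = wcnt w := by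
  funext i
  unfold wcnt
  refine Finset.card_bij (fun j _ => σ j) ?_ ?_ ?_
  · intro a ha; simpa using ha
  · intro a _ b _ h; exact σ.injective h
  · intro b hb
    exact ⟨σ.symm b, by simpa using hb, by simp⟩

lemma wcnt_sum {m : ℕ} (w : Fin m → Fin 3) : wcnt w ∈ Finset.Nat.antidiagonalTuple 3 m := by
  rw [Finset.Nat.mem_antidiagonalTuple]
  have := Finset.card_eq_sum_card_fiberwise (f := w) (s := Finset.univ) (t := Finset.univ)
    (by intro x _; simp)
  simpa [wcnt] using this.symm

lemma exists_perm {m : ℕ} (w w' : Fin m → Fin 3) (h : wcnt w = wcnt w') :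
    ∃ σ : Equiv.Perm (Fin m), w ∘ σ = w' := by
  have e : ∀ i, Nonempty ({a // w' a = i} ≃ {b // w b = i}) := by
    intro i
    refine ⟨Fintype.equivOfCardEq ?_⟩
    have := congrFun h i
    simp only [wcnt] at this
    simp only [Fintype.card_subtype]
    exact this.symm
  refine ⟨Equiv.ofFiberEquiv (fun i => (e i).some), ?_⟩
  funext a
  exact Equiv.ofFiberEquiv_map _ a

lemma card_perm {m : ℕ} (w w' : Fin m → Fin 3) (h : wcnt w = wcnt w') :
    (Finset.univ.filter (fun σ : Equiv.Perm (Fin m) => w ∘ σ = w')).card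
      = (wcnt w 0).factorial * (wcnt w 1).factorial * (wcnt w 2).factorial := by
  obtain ⟨τ, rfl⟩ := exists_perm w w' h
  have h1 : (Finset.univ.filter (fun σ : Equiv.Perm (Fin m) => w ∘ σ = w ∘ τ)).card
      = (Finset.univ.filter (fun σ : Equiv.Perm (Fin m) => w ∘ σ = w)).card := by
    refine Finset.card_bij (fun σ _ => σ * τ⁻¹) ?_ ?_ ?_
    · intro σ hσ
      simp only [Finset.mem_filter, Finset.mem_univ, true_and] at hσ ⊢
      funext x
      have := congrFun hσ (τ⁻¹ x)
      simpa using this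
    · intro a _ b _ h; exact mul_right_cancel h
    · intro b hb
      refine ⟨b * τ, ?_, by simp⟩
      simp only [Finset.mem_filter, Finset.mem_univ, true_and] at hb ⊢
      funext x
      have := congrFun hb (τ x)
      simpa using this
  rw [h1]
  have := DomMulAct.stabilizer_card w
  rw [Fintype.card_subtype] at this
  rw [this, Fin.prod_univ_three]
  simp only [Fintype.card_subtype, wcnt]

lemma regroup {M : Type*} [AddCommMonoid M] {m : ℕ}
    (h : (Fin m → Fin 3) → (Fin m → Fin 3) → M) :
    ∑ σ : Equiv.Perm (Fin m), ∑ w : Fin m → Fin 3, h w (w ∘ σ)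
      = ∑ α ∈ Finset.Nat.antidiagonalTuple 3 m,
          ((α 0).factorial * (α 1).factorial * (α 2).factorial) •
          ∑ w ∈ Finset.univ.filter (fun w : Fin m → Fin 3 => wcnt w = α),
          ∑ w' ∈ Finset.univ.filter (fun w : Fin m → Fin 3 => wcnt w = α), h w w' := by
  rw [Finset.sum_comm]
  rw [← Finset.sum_fiberwise_of_maps_to (s := Finset.univ) (g := fun w : Fin m → Fin 3 => wcnt w)
    (fun w _ => wcnt_sum w)]
  refine Finset.sum_congr rfl fun α _ => ?_
  rw [Finset.smul_sum]
  refine Finset.sum_congr rfl fun w hw => ?_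
  simp only [Finset.mem_filter, Finset.mem_univ, true_and] at hw
  rw [← Finset.sum_fiberwise_of_maps_to (s := Finset.univ)
    (t := Finset.univ.filter (fun w : Fin m → Fin 3 => wcnt w = α))
    (g := fun σ : Equiv.Perm (Fin m) => w ∘ σ)
    (fun σ _ => by simp [wcnt_comp, hw]), Finset.smul_sum]
  refine Finset.sum_congr rfl fun w' hw' => ?_
  simp only [Finset.mem_filter, Finset.mem_univ, true_and] at hw'
  rw [Finset.sum_congr rfl (g := fun _ => h w w')
    (fun σ hσ => by rw [(Finset.mem_filter.1 hσ).2])]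
  rw [Finset.sum_const, card_perm w w' (hw.trans hw'.symm), hw]

lemma normSym_sum {A : Type*} [CommRing A] [Algebra ℂ A]
    (Z : Fin 3 → Module.End ℂ A) (c : ℝ) (m : ℕ) (F G : A) :
    ∑ α ∈ Finset.Nat.antidiagonalTuple 3 m, normSymOp c Z α F * normSymOp c Z α G
      = ((c ^ 2 / (m.factorial : ℝ) : ℝ) : ℂ) •
        ∑ σ : Equiv.Perm (Fin m), ∑ w : Fin m → Fin 3, wprod Z w F * wprod Z (w ∘ σ) G := by
  rw [regroup (fun w w' => wprod Z w F * wprod Z w' G), Finset.smul_sum]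
  refine Finset.sum_congr rfl fun α hα => ?_
  rw [Finset.Nat.mem_antidiagonalTuple, Fin.sum_univ_three] at hα
  unfold normSymOp
  rw [symOp_eq Z α m hα, hα, ← Finset.sum_mul_sum, LinearMap.smul_apply, LinearMap.smul_apply,
    smul_mul_smul_comm, LinearMap.sum_apply, LinearMap.sum_apply,
    ← Nat.cast_smul_eq_nsmul ℂ, smul_smul]
  congr 1
  rw [← Complex.ofReal_mul, ← Complex.ofReal_natCast, ← Complex.ofReal_mul]
  congr 1
  rw [mul_mul_mul_comm, Real.mul_self_sqrt (by positivity)]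
  push_cast
  ring

lemma wprod_comm {A : Type*} [AddCommGroup A] [Module ℂ A]
    (Z : Fin 3 → Module.End ℂ A)
    (hcomm : ∀ i j, Z i * Z j - Z j * Z i = ∑ k, ((leviCivita i j k : ℝ) : ℂ) • Z k)
    (y : Fin 3) : ∀ {m : ℕ} (w : Fin m → Fin 3),
    wprod Z w * Z y = Z y * wprod Z w
      + ∑ p, ∑ k, ((leviCivita (w p) y k : ℝ) : ℂ) • wprod Z (Function.update w p k) := by
  intro m
  induction m with
  | zero => intro w; simp [wprod]
  | succ n ih =>
    intro w
    have hs : ∀ v : Fin (n+1) → Fin 3, wprod Z v = Z (v 0) * wprod Z (fun j => v j.succ) := by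
      intro v; simp [wprod, List.ofFn_succ]
    have h0 : ∀ k, wprod Z (Function.update w 0 k) = Z k * wprod Z (fun j => w j.succ) := by
      intro k; rw [hs]; simp
    have h1 : ∀ (p : Fin n) k, wprod Z (Function.update w p.succ k)
        = Z (w 0) * wprod Z (Function.update (fun j => w j.succ) p k) := by
      intro p k; rw [hs]
      have e : (fun j : Fin n => Function.update w p.succ k j.succ)
          = Function.update (fun j => w j.succ) p k := by
        funext j
        by_cases hj : j = p
        · subst hj; simp
        · simp [Function.update_of_ne hj,
            Function.update_of_ne (fun h => hj (Fin.succ_injective _ h))]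
      rw [e, Function.update_of_ne (Fin.succ_ne_zero p).symm]
    rw [Fin.sum_univ_succ]
    simp only [h0, h1]
    rw [hs w, mul_assoc, ih, mul_add, ← mul_assoc, ← mul_assoc,
      eq_add_of_sub_eq (hcomm (w 0) y), add_mul, Finset.sum_mul, Finset.mul_sum]
    simp only [Finset.mul_sum, smul_mul_assoc, mul_smul_comm]
    abel

lemma leviCivita_anti (i j k : Fin 3) : leviCivita k j i = - leviCivita i j k := by
  unfold leviCivita; ring

lemma cancel {M : Type*} [AddCommGroup M] [Module ℂ M] {m : ℕ} (y : Fin 3) (p : Fin m)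
    (h : (Fin m → Fin 3) → (Fin m → Fin 3) → M) :
    (∑ w : Fin m → Fin 3, ∑ k, ((leviCivita (w p) y k : ℝ) : ℂ) • h (Function.update w p k) w)
    + (∑ w : Fin m → Fin 3, ∑ k, ((leviCivita (w p) y k : ℝ) : ℂ) • h w (Function.update w p k))
    = 0 := by
  rw [← Fintype.sum_prod_type', ← Fintype.sum_prod_type', add_eq_zero_iff_eq_neg,
    ← Finset.sum_neg_distrib]
  refine Finset.sum_bij' (fun x _ => (Function.update x.1 p x.2, x.1 p))
    (fun x _ => (Function.update x.1 p x.2, x.1 p)) ?_ ?_ ?_ ?_ ?_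
  · simp
  · simp
  · intro x _; simp
  · intro x _; simp
  · intro x _
    simp [leviCivita_anti (x.1 p) y x.2]

lemma key {A : Type*} [CommRing A] [Algebra ℂ A]
    (Z : Fin 3 → Module.End ℂ A)
    (hder : ∀ i (f g : A), Z i (f * g) = Z i f * g + f * Z i g)
    (hcomm : ∀ i j, Z i * Z j - Z j * Z i = ∑ k, ((leviCivita i j k : ℝ) : ℂ) • Z k)
    (m : ℕ) (σ : Equiv.Perm (Fin m)) (y : Fin 3) (f g : A) :
    ∑ w : Fin m → Fin 3, (wprod Z w (Z y f) * wprod Z (w ∘ σ) g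
      + wprod Z w f * wprod Z (w ∘ σ) (Z y g))
    = Z y (∑ w : Fin m → Fin 3, wprod Z w f * wprod Z (w ∘ σ) g) := by
  have hc : ∀ (w : Fin m → Fin 3) (u : A), wprod Z w (Z y u) = Z y (wprod Z w u)
      + ∑ p, ∑ k, ((leviCivita (w p) y k : ℝ) : ℂ) • wprod Z (Function.update w p k) u := by
    intro w u
    have := congrArg (fun T : Module.End ℂ A => T u) (wprod_comm Z hcomm y w)
    simpa [LinearMap.sum_apply] using this
  have h2 : ∀ (w : Fin m → Fin 3), (∑ p, ∑ k, ((leviCivita ((w ∘ σ) p) y k : ℝ) : ℂ) •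
        wprod Z (Function.update (w ∘ σ) p k) g)
      = ∑ p, ∑ k, ((leviCivita (w p) y k : ℝ) : ℂ) • wprod Z (Function.update w p k ∘ σ) g := by
    intro w
    symm
    rw [← Equiv.sum_comp σ]
    refine Finset.sum_congr rfl fun p _ => Finset.sum_congr rfl fun k _ => ?_
    rw [Function.update_comp_eq_of_injective w σ.injective]
    rfl
  have h3 : ∑ w : Fin m → Fin 3,
      ((∑ p, ∑ k, ((leviCivita (w p) y k : ℝ) : ℂ) • wprod Z (Function.update w p k) f)
          * wprod Z (w ∘ σ) g
        + wprod Z w f * ∑ p, ∑ k, ((leviCivita (w p) y k : ℝ) : ℂ) •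
            wprod Z (Function.update w p k ∘ σ) g) = 0 := by
    simp only [Finset.sum_mul, Finset.mul_sum, smul_mul_assoc, mul_smul_comm]
    rw [Finset.sum_add_distrib, Finset.sum_comm, Finset.sum_comm (s := Finset.univ) (t := Finset.univ) (f := fun (w : Fin m → Fin 3) (p : Fin m) => ∑ k, ((leviCivita (w p) y k : ℝ) : ℂ) • (wprod Z w f * wprod Z (Function.update w p k ∘ σ) g)),
      ← Finset.sum_add_distrib]
    refine Finset.sum_eq_zero fun p _ => ?_
    exact cancel y p (fun w w' => wprod Z w f * wprod Z (w' ∘ σ) g)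
  rw [map_sum, ← add_zero (∑ w : Fin m → Fin 3, Z y _), ← h3, ← Finset.sum_add_distrib]
  refine Finset.sum_congr rfl fun w _ => ?_
  rw [hc, hc, hder, h2]
  ring

lemma key2 {A : Type*} [CommRing A] [Algebra ℂ A]
    (Z : Fin 3 → Module.End ℂ A)
    (hder : ∀ i (f g : A), Z i (f * g) = Z i f * g + f * Z i g)
    (hcomm : ∀ i j, Z i * Z j - Z j * Z i = ∑ k, ((leviCivita i j k : ℝ) : ℂ) • Z k)
    (Int : A →ₗ[ℂ] ℂ) (hInt : ∀ i (h : A), Int (Z i h) = 0)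
    (c : ℝ) (m : ℕ) (f g : A) (y : Fin 3) :
    ∑ α ∈ Finset.Nat.antidiagonalTuple 3 m,
        Int (normSymOp c Z α (Z y f) * normSymOp c Z α g
          + normSymOp c Z α f * normSymOp c Z α (Z y g)) = 0 := by
  rw [← map_sum, Finset.sum_add_distrib, normSym_sum, normSym_sum, ← smul_add,
    ← Finset.sum_add_distrib, map_smul, map_sum]
  simp only [← Finset.sum_add_distrib, key Z hder hcomm, hInt]
  simp

lemma key3 {A : Type*} [CommRing A] [Algebra ℂ A]
    (Z : Fin 3 → Module.End ℂ A)
    (hder : ∀ i (f g : A), Z i (f * g) = Z i f * g + f * Z i g)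
    (hcomm : ∀ i j, Z i * Z j - Z j * Z i = ∑ k, ((leviCivita i j k : ℝ) : ℂ) • Z k)
    (Int : A →ₗ[ℂ] ℂ) (hInt : ∀ i (h : A), Int (Z i h) = 0)
    (c : ℝ) (m : ℕ) (f g : A) (a b : ℂ) (X : Module.End ℂ A) (hX : X = a • Z 0 + b • Z 1) :
    ∑ α ∈ Finset.Nat.antidiagonalTuple 3 m,
        Int (normSymOp c Z α (X f) * normSymOp c Z α g
          + normSymOp c Z α f * normSymOp c Z α (X g)) = 0 := by
  have h0 := key2 Z hder hcomm Int hInt c m f g 0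
  have h1 := key2 Z hder hcomm Int hInt c m f g 1
  have : (0 : ℂ) = a * 0 + b * 0 := by ring
  rw [this]
  nth_rewrite 1 [← h0]
  rw [← h1, Finset.mul_sum, Finset.mul_sum, ← Finset.sum_add_distrib]
  refine Finset.sum_congr rfl fun α _ => ?_
  subst hX
  simp only [LinearMap.add_apply, LinearMap.smul_apply, map_add, map_smul, add_mul, mul_add,
    smul_mul_assoc, mul_smul_comm, smul_eq_mul]
  ring

/-- Integrated Leibniz-commutation lemma: with `X_± = -(Z₂ ± iZ₁)` and the integral
against the normalized Haar measure (modelled by a linear functional `Int` annihilating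
the left-invariant derivatives `Z_i h`),
`Σ_{|α|=m} ∫ ((Z^α X_± f)(Z^α g) + (Z^α f)(Z^α X_± g)) dμ = 0`. -/
theorem integrated_leibniz_commutation {A : Type*} [CommRing A] [Algebra ℂ A]
    (Z : Fin 3 → Module.End ℂ A)
    (hder : ∀ i (f g : A), Z i (f * g) = Z i f * g + f * Z i g)
    (hcomm : ∀ i j, Z i * Z j - Z j * Z i = ∑ k, ((leviCivita i j k : ℝ) : ℂ) • Z k)
    (Int : A →ₗ[ℂ] ℂ) (hInt : ∀ i (h : A), Int (Z i h) = 0)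
    (Xp Xm : Module.End ℂ A)
    (hXp : Xp = -(Z 1 + Complex.I • Z 0))
    (hXm : Xm = -(Z 1 - Complex.I • Z 0))
    (c : ℝ) (hc : 0 < c) (m : ℕ) (f g : A) :
    (∑ α ∈ Finset.Nat.antidiagonalTuple 3 m,
        Int (normSymOp c Z α (Xp f) * normSymOp c Z α g
          + normSymOp c Z α f * normSymOp c Z α (Xp g)) = 0) ∧
    (∑ α ∈ Finset.Nat.antidiagonalTuple 3 m,
        Int (normSymOp c Z α (Xm f) * normSymOp c Z α g
          + normSymOp c Z α f * normSymOp c Z α (Xm g)) = 0) := by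
  constructor
  · exact key3 Z hder hcomm Int hInt c m f g (-Complex.I) (-1) Xp (by rw [hXp]; module)
  · exact key3 Z hder hcomm Int hInt c m f g Complex.I (-1) Xm (by rw [hXm]; module)
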